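/- arXiv:1102.2764 — 3 statements merged into one kernel-verified Lean document; each statement's English description precedes it below -/
import Mathlib

section
/- The function u⁰ is smooth and strictly convex on the interior P° of P; in fact its Hessian D²u⁰(y) is a positive definite matrix at every y ∈ P°. -/
noncomputable section

/-- Dot product on `Fin n → ℝ`. -/
def dotp {n : ℕ} (x y : Fin n → ℝ) : ℝ := ∑ j, x j * y j

/-- The affine functions `lᵢ(y) = ⟨y, n⁽ⁱ⁾⟩ + 1`. -/
def lfun {n d : ℕ} (N : Fin d → Fin n → ℤ) (i : Fin d) (y : Fin n → ℝ) : ℝ :=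
  (∑ j, y j * (N i j : ℝ)) + 1

/-- The dual polytope `P = {y : ⟨y, n⁽ⁱ⁾⟩ ≥ -1 for all i}`. -/
def Pset {n d : ℕ} (N : Fin d → Fin n → ℤ) : Set (Fin n → ℝ) :=
  {y | ∀ i, (∑ j, y j * (N i j : ℝ)) ≥ -1}

/-- The function `u⁰(y) = ∑ᵢ lᵢ(y) log lᵢ(y)`. -/
def u0 {n d : ℕ} (N : Fin d → Fin n → ℤ) (y : Fin n → ℝ) : ℝ :=
  ∑ i, lfun N i y * Real.log (lfun N i y)

/-- Second partial derivatives (Hessian matrix) of a function on `Fin n → ℝ`. -/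
def hess {n : ℕ} (f : (Fin n → ℝ) → ℝ) (x : Fin n → ℝ) : Matrix (Fin n) (Fin n) ℝ :=
  Matrix.of fun p q => fderiv ℝ (fun z => fderiv ℝ f z (Pi.single q 1)) x (Pi.single p 1)

/-- the linear part -/
def Lin {n d : ℕ} (N : Fin d → Fin n → ℤ) (i : Fin d) : (Fin n → ℝ) →L[ℝ] ℝ :=
  ∑ j, (N i j : ℝ) • ContinuousLinearMap.proj (R := ℝ) (φ := fun _ : Fin n => ℝ) j

lemma Lin_apply {n d : ℕ} (N : Fin d → Fin n → ℤ) (i : Fin d) (y : Fin n → ℝ) :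
    Lin N i y = ∑ j, y j * (N i j : ℝ) := by
  simp [Lin, ContinuousLinearMap.sum_apply, mul_comm]

lemma lfun_eq {n d : ℕ} (N : Fin d → Fin n → ℤ) (i : Fin d) (y : Fin n → ℝ) :
    lfun N i y = Lin N i y + 1 := by
  rw [Lin_apply, lfun]

lemma Lin_single {n d : ℕ} (N : Fin d → Fin n → ℤ) (i : Fin d) (q : Fin n) :
    Lin N i (Pi.single q 1) = (N i q : ℝ) := by
  rw [Lin_apply]; simp [Pi.single_apply]

lemma exists_scale {n : ℕ} {S : Set (Fin n → ℝ)} {y : Fin n → ℝ} (hy : y ∈ interior S)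
    (v : Fin n → ℝ) : ∃ t : ℝ, 0 < t ∧ y + t • v ∈ S := by
  have hc : Filter.Tendsto (fun t : ℝ => y + t • v) (nhdsWithin 0 (Set.Ioi 0)) (nhds y) := by
    have : Continuous (fun t : ℝ => y + t • v) := by fun_prop
    have h := this.tendsto 0
    simp only [zero_smul, add_zero] at h
    exact h.mono_left nhdsWithin_le_nhds
  have h1 := hc.eventually (mem_interior_iff_mem_nhds.mp hy)
  obtain ⟨t, ht, ht0⟩ := (h1.and self_mem_nhdsWithin).exists
  exact ⟨t, ht0, ht⟩

lemma lfun_pos {n d : ℕ} (N : Fin d → Fin n → ℤ) {y : Fin n → ℝ}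
    (hy : y ∈ interior (Pset N)) (i : Fin d) : 0 < lfun N i y := by
  obtain ⟨t, ht, hm⟩ := exists_scale hy y
  have h := hm i
  rw [← Lin_apply, map_add, map_smul, smul_eq_mul] at h
  rw [lfun_eq]
  by_contra hcon
  push Not at hcon
  nlinarith

lemma eq_zero_of_Lin {n d : ℕ} (N : Fin d → Fin n → ℤ)
    (hQ : (0 : Fin n → ℝ) ∈ interior (convexHull ℝ (Set.range fun i => fun j => (N i j : ℝ))))
    {v : Fin n → ℝ} (hv : ∀ i, Lin N i v = 0) : v = 0 := by
  obtain ⟨t, ht, hm⟩ := exists_scale hQ v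
  let W : Submodule ℝ (Fin n → ℝ) :=
    { carrier := {x | x ⬝ᵥ v = 0}
      add_mem' := by
        intro a b ha hb
        simp only [Set.mem_setOf_eq] at *
        rw [add_dotProduct, ha, hb, add_zero]
      zero_mem' := by simp
      smul_mem' := by
        intro c x hx
        simp only [Set.mem_setOf_eq] at *
        rw [smul_dotProduct, hx, smul_zero] }
  have hsub : convexHull ℝ (Set.range fun i => fun j => (N i j : ℝ)) ⊆ (W : Set (Fin n → ℝ)) := by
    apply convexHull_min _ W.convex
    rintro _ ⟨i, rfl⟩
    have := hv i
    rw [Lin_apply] at this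
    change (fun j => (N i j : ℝ)) ⬝ᵥ v = 0
    simpa [dotProduct, mul_comm] using this
  have h : (0 + t • v) ⬝ᵥ v = 0 := hsub hm
  rw [zero_add, smul_dotProduct, smul_eq_mul] at h
  have h2 := (mul_eq_zero.mp h).resolve_left ht.ne'
  exact dotProduct_self_eq_zero.mp h2

lemma hasFDerivAt_lfun {n d : ℕ} (N : Fin d → Fin n → ℤ) (i : Fin d) (y : Fin n → ℝ) :
    HasFDerivAt (lfun N i) (Lin N i) y := by
  have : lfun N i = fun y => Lin N i y + 1 := funext (lfun_eq N i)
  rw [this]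
  exact (Lin N i).hasFDerivAt.add_const 1

lemma fderiv_u0 {n d : ℕ} (N : Fin d → Fin n → ℤ) {y : Fin n → ℝ}
    (hy : y ∈ interior (Pset N)) (q : Fin n) :
    fderiv ℝ (u0 N) y (Pi.single q 1) = ∑ i, (Real.log (lfun N i y) + 1) * (N i q : ℝ) := by
  have h : HasFDerivAt (u0 N) (∑ i, (Real.log (lfun N i y) + 1) • Lin N i) y := by
    unfold u0
    apply HasFDerivAt.fun_sum
    intro i _
    exact (Real.hasDerivAt_mul_log (lfun_pos N hy i).ne').comp_hasFDerivAt y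
      (hasFDerivAt_lfun N i y)
  rw [h.fderiv]
  simp [ContinuousLinearMap.sum_apply, Lin_single]

lemma hess_u0 {n d : ℕ} (N : Fin d → Fin n → ℤ) {y : Fin n → ℝ}
    (hy : y ∈ interior (Pset N)) (p q : Fin n) :
    hess (u0 N) y p q = ∑ i, (lfun N i y)⁻¹ * (N i p : ℝ) * (N i q : ℝ) := by
  have he : (fun z => fderiv ℝ (u0 N) z (Pi.single q 1)) =ᶠ[nhds y]
      fun z => ∑ i, (Real.log (lfun N i z) + 1) * (N i q : ℝ) := by
    filter_upwards [isOpen_interior.mem_nhds hy] with z hz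
    exact fderiv_u0 N hz q
  have h : HasFDerivAt (fun z => ∑ i, (Real.log (lfun N i z) + 1) * (N i q : ℝ))
      (∑ i, (N i q : ℝ) • ((lfun N i y)⁻¹ • Lin N i)) y := by
    apply HasFDerivAt.fun_sum
    intro i _
    exact (((hasFDerivAt_lfun N i y).log (lfun_pos N hy i).ne').add_const 1).mul_const _
  change fderiv ℝ (fun z => fderiv ℝ (u0 N) z (Pi.single q 1)) y (Pi.single p 1) = _
  rw [he.fderiv_eq, h.fderiv]
  simp only [ContinuousLinearMap.sum_apply, ContinuousLinearMap.smul_apply, Lin_single,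
    smul_eq_mul]
  exact Finset.sum_congr rfl fun i _ => by ring

lemma convex_Pset {n d : ℕ} (N : Fin d → Fin n → ℤ) : Convex ℝ (Pset N) := by
  intro x hx y hy a b ha hb hab i
  have h1 := hx i
  have h2 := hy i
  rw [← Lin_apply] at *
  rw [map_add, map_smul, map_smul, smul_eq_mul, smul_eq_mul]
  nlinarith

/-- `u⁰` is smooth and strictly convex on `P°`, with positive definite Hessian everywhere
on `P°`. -/
theorem u0_smooth_strictConvex {n d : ℕ} (hn : 1 ≤ n) (N : Fin d → Fin n → ℤ)
    (hQ : (0 : Fin n → ℝ) ∈ interior (convexHull ℝ (Set.range fun i => fun j => (N i j : ℝ)))) :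
    ContDiffOn ℝ (⊤ : ℕ∞) (u0 N) (interior (Pset N)) ∧
    StrictConvexOn ℝ (interior (Pset N)) (u0 N) ∧
    ∀ y ∈ interior (Pset N), (hess (u0 N) y).PosDef := by
  refine ⟨?_, ⟨(convex_Pset N).interior, ?_⟩, ?_⟩
  · unfold u0
    apply ContDiffOn.sum
    intro i _
    have hl : ContDiffOn ℝ (⊤ : ℕ∞) (lfun N i) (interior (Pset N)) := by
      have : lfun N i = fun y => Lin N i y + 1 := funext (lfun_eq N i)
      rw [this]
      exact ((Lin N i).contDiff.add contDiff_const).contDiffOn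
    exact hl.mul (hl.log fun y hy => (lfun_pos N hy i).ne')
  · intro x hx y hy hxy a b ha hb hab
    have hl : ∀ i, lfun N i (a • x + b • y) = a • lfun N i x + b • lfun N i y := by
      intro i
      simp only [lfun_eq, map_add, map_smul, smul_eq_mul]
      linear_combination -hab
    have hex : ∃ i, lfun N i x ≠ lfun N i y := by
      by_contra hcon
      push Not at hcon
      apply hxy
      apply sub_eq_zero.mp
      apply eq_zero_of_Lin N hQ
      intro i
      have := hcon i
      rw [lfun_eq, lfun_eq] at this
      rw [map_sub]; linarith
    simp only [u0, Finset.smul_sum, ← Finset.sum_add_distrib]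
    apply Finset.sum_lt_sum
    · intro i _
      rw [hl]
      exact Real.strictConvexOn_mul_log.convexOn.2 (lfun_pos N hx i).le (lfun_pos N hy i).le
        ha.le hb.le hab
    · obtain ⟨i, hi⟩ := hex
      refine ⟨i, Finset.mem_univ i, ?_⟩
      rw [hl]
      exact Real.strictConvexOn_mul_log.2 (lfun_pos N hx i).le (lfun_pos N hy i).le hi ha hb hab
  · intro y hy
    apply Matrix.PosDef.of_dotProduct_mulVec_pos
    · ext p q
      rw [Matrix.conjTranspose_apply, hess_u0 N hy, hess_u0 N hy, star_trivial]
      exact Finset.sum_congr rfl fun i _ => by ring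
    · intro v hv
      have key : star v ⬝ᵥ (hess (u0 N) y).mulVec v
          = ∑ i, (lfun N i y)⁻¹ * (Lin N i v) ^ 2 := by
        simp only [dotProduct, Matrix.mulVec, hess_u0 N hy, Lin_apply, star_trivial, sq,
          Finset.sum_mul, Finset.mul_sum, Pi.star_apply]
        rw [Finset.sum_comm_cycle]
        refine Finset.sum_congr rfl fun i _ => ?_
        rw [Finset.sum_comm]
        refine Finset.sum_congr rfl fun p _ => Finset.sum_congr rfl fun q _ => ?_
        ring
      rw [key]
      have hex : ∃ i, Lin N i v ≠ 0 := by
        by_contra hcon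
        push Not at hcon
        exact hv (eq_zero_of_Lin N hQ hcon)
      obtain ⟨i, hi⟩ := hex
      refine Finset.sum_pos' (fun j _ => ?_) ⟨i, Finset.mem_univ i, ?_⟩
      · have := lfun_pos N hy j
        positivity
      · have := lfun_pos N hy i
        positivity
end
end

section
/- There exists a unique vector c = (c₁,…,cₙ) ∈ ℝⁿ such that ∫_P yᵢ e^{⟨c,y⟩} dy = 0 for every i = 1,…,n; moreover c is the unique minimum point of the function F(s) := ∫_P e^{⟨s,y⟩} dy. -/
open MeasureTheory

noncomputable section

lemma dotp_cont {n : ℕ} : Continuous (fun p : (Fin n → ℝ) × (Fin n → ℝ) => dotp p.1 p.2) := by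
  unfold dotp; fun_prop

lemma F_cont {n : ℕ} {P : Set (Fin n → ℝ)} (hc : IsCompact P) :
    Continuous (fun s : Fin n → ℝ => ∫ y in P, Real.exp (dotp s y)) := by
  apply continuous_parametric_integral_of_continuous _ hc
  exact Real.continuous_exp.comp dotp_cont

lemma D_cont {n : ℕ} {P : Set (Fin n → ℝ)} (hc : IsCompact P) (i : Fin n) :
    Continuous (fun s : Fin n → ℝ => ∫ y in P, y i * Real.exp (dotp s y)) := by
  apply continuous_parametric_integral_of_continuous _ hc
  exact ((continuous_apply i).comp continuous_snd).mul (Real.continuous_exp.comp dotp_cont)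

lemma dotp_cont_right {n : ℕ} (s : Fin n → ℝ) : Continuous (dotp s) := by
  unfold dotp; fun_prop

lemma key {n : ℕ} {P : Set (Fin n → ℝ)} (hc : IsCompact P) (h0 : (0 : Fin n → ℝ) ∈ interior P)
    (c s : Fin n → ℝ) (hs : s ≠ c) :
    (∫ y in P, Real.exp (dotp c y)) + ∑ i, (s i - c i) * ∫ y in P, y i * Real.exp (dotp c y)
      < ∫ y in P, Real.exp (dotp s y) := by
  have cE : ∀ s : Fin n → ℝ, Continuous (fun y => Real.exp (dotp s y)) := fun s =>
    Real.continuous_exp.comp (dotp_cont_right s)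
  have iE : ∀ s : Fin n → ℝ, IntegrableOn (fun y => Real.exp (dotp s y)) P := fun s =>
    (cE s).continuousOn.integrableOn_compact hc
  have cD : ∀ i, Continuous (fun y : Fin n → ℝ => (s i - c i) * (y i * Real.exp (dotp c y))) :=
    fun i => continuous_const.mul ((continuous_apply i).mul (cE c))
  have iD : ∀ i, IntegrableOn (fun y : Fin n → ℝ => (s i - c i) * (y i * Real.exp (dotp c y))) P :=
    fun i => (cD i).continuousOn.integrableOn_compact hc
  have hlin : ∀ y : Fin n → ℝ, ∑ i, (s i - c i) * (y i * Real.exp (dotp c y))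
      = (dotp s y - dotp c y) * Real.exp (dotp c y) := by
    intro y
    unfold dotp
    rw [← Finset.sum_sub_distrib, Finset.sum_mul]
    exact Finset.sum_congr rfl fun i _ => by ring
  set g : (Fin n → ℝ) → ℝ := fun y => Real.exp (dotp s y) - (Real.exp (dotp c y) +
    ∑ i, (s i - c i) * (y i * Real.exp (dotp c y))) with hg
  have cg : Continuous g := (cE s).sub ((cE c).add (continuous_finsetSum _ fun i _ => cD i))
  have gform : ∀ y, g y = Real.exp (dotp c y) *
      (Real.exp (dotp s y - dotp c y) - (dotp s y - dotp c y + 1)) := by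
    intro y
    simp only [hg, hlin]
    rw [mul_sub, ← Real.exp_add]
    ring_nf
  have gnn : ∀ y, 0 ≤ g y := by
    intro y
    rw [gform]
    exact mul_nonneg (Real.exp_pos _).le (sub_nonneg.2 (Real.add_one_le_exp _))
  have gpos : 0 < ∫ y in P, g y := by
    rw [setIntegral_pos_iff_support_of_nonneg_ae (Filter.Eventually.of_forall gnn)
      (cg.continuousOn.integrableOn_compact hc)]
    have hopen : IsOpen (Function.support g ∩ interior P) := cg.isOpen_support.inter isOpen_interior
    have hne : (Function.support g ∩ interior P).Nonempty := by
      have ht : Filter.Tendsto (fun e : ℝ => e • (s - c)) (nhdsWithin 0 (Set.Ioi 0)) (nhds 0) := by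
        have : Continuous (fun e : ℝ => e • (s - c)) := by fun_prop
        have := this.tendsto 0
        rw [zero_smul] at this
        exact this.mono_left nhdsWithin_le_nhds
      obtain ⟨e, he, hep⟩ := ((ht.eventually (isOpen_interior.mem_nhds h0)).and
        self_mem_nhdsWithin).exists
      refine ⟨e • (s - c), ?_, he⟩
      have hep : 0 < e := hep
      have hd : dotp s (e • (s - c)) - dotp c (e • (s - c)) = e * ∑ i, (s i - c i) ^ 2 := by
        unfold dotp
        rw [← Finset.sum_sub_distrib, Finset.mul_sum]
        exact Finset.sum_congr rfl fun i _ => by simp; ring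
      have hsum : 0 < ∑ i, (s i - c i) ^ 2 := by
        obtain ⟨i, hi⟩ := Function.ne_iff.1 hs
        exact Finset.sum_pos' (fun i _ => sq_nonneg _)
          ⟨i, Finset.mem_univ _, by have := sub_ne_zero.2 hi; positivity⟩
      rw [Function.mem_support, gform, hd]
      refine (mul_pos (Real.exp_pos _) (sub_pos.2 (Real.add_one_lt_exp ?_))).ne'
      positivity
    exact (hopen.measure_pos volume hne).trans_le
      (measure_mono (Set.inter_subset_inter_right _ interior_subset))
  have : ∫ y in P, g y = (∫ y in P, Real.exp (dotp s y)) - ((∫ y in P, Real.exp (dotp c y)) +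
      ∑ i, (s i - c i) * ∫ y in P, y i * Real.exp (dotp c y)) := by
    have iS : IntegrableOn (fun y : Fin n → ℝ =>
        ∑ i, (s i - c i) * (y i * Real.exp (dotp c y))) P :=
      integrable_finsetSum _ fun i _ => iD i
    have iA : IntegrableOn (fun y : Fin n → ℝ => Real.exp (dotp c y) +
        ∑ i, (s i - c i) * (y i * Real.exp (dotp c y))) P := (iE c).add iS
    simp only [hg]
    rw [integral_sub (iE s) iA, integral_add (iE c) iS,
      integral_finsetSum _ fun i _ => iD i]
    simp only [integral_const_mul]
  linarith

lemma coercive {n : ℕ} {P : Set (Fin n → ℝ)} (hc : IsCompact P)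
    (h0 : (0 : Fin n → ℝ) ∈ interior P) :
    Filter.Tendsto (fun s : Fin n → ℝ => ∫ y in P, Real.exp (dotp s y))
      (Filter.cocompact _) Filter.atTop := by
  obtain ⟨r, hr, hrP⟩ := Metric.mem_nhds_iff.1 (mem_interior_iff_mem_nhds.1 h0)
  set v := volume.real (Metric.ball (0 : Fin n → ℝ) (r / 4)) with hv
  have hvpos : 0 < v := by
    rw [hv, Measure.real]
    exact ENNReal.toReal_pos (Metric.measure_ball_pos _ _ (by positivity)).ne'
      measure_ball_lt_top.ne
  have hbound : ∀ s : Fin n → ℝ, v * (r / 4 * ‖s‖) ≤ ∫ y in P, Real.exp (dotp s y) := by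
    intro s
    have iE : IntegrableOn (fun y => Real.exp (dotp s y)) P :=
      (Real.continuous_exp.comp (dotp_cont_right s)).continuousOn.integrableOn_compact hc
    set p : Fin n → ℝ := fun i => if 0 ≤ s i then r / 2 else - (r / 2) with hp
    have hpn : ‖p‖ ≤ r / 2 := by
      rw [pi_norm_le_iff_of_nonneg (by positivity)]
      intro i
      simp only [hp]
      split_ifs <;> simp [abs_of_pos hr]
    have hsub : Metric.ball p (r / 4) ⊆ P := by
      refine Set.Subset.trans (Metric.ball_subset_ball' ?_) hrP
      rw [dist_zero_right]; linarith
    have hlow : ∀ y ∈ Metric.ball p (r / 4), r / 4 * ‖s‖ ≤ Real.exp (dotp s y) := by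
      intro y hy
      have h1 : ∀ i, r / 4 * |s i| ≤ s i * y i := by
        intro i
        have := (dist_le_pi_dist y p i).trans (Metric.mem_ball.1 hy).le
        rw [Real.dist_eq, abs_le] at this
        simp only [hp] at this
        split_ifs at this with h
        · rw [abs_of_nonneg h]; nlinarith
        · rw [abs_of_neg (not_le.1 h)]; nlinarith
      have hnn : ∀ i, 0 ≤ s i * y i := fun i => le_trans (by positivity) (h1 i)
      have h2 : r / 4 * ‖s‖ ≤ dotp s y := by
        have : ‖s‖ ≤ dotp s y / (r / 4) := by
          have hd : 0 ≤ dotp s y := Finset.sum_nonneg fun i _ => hnn i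
          rw [pi_norm_le_iff_of_nonneg (by positivity)]
          intro i
          rw [le_div_iff₀ (by positivity), Real.norm_eq_abs, mul_comm]
          exact (h1 i).trans (Finset.single_le_sum (f := fun i => s i * y i)
            (fun i _ => hnn i) (Finset.mem_univ i))
        rwa [le_div_iff₀ (by positivity), mul_comm] at this
      linarith [Real.add_one_le_exp (dotp s y)]
    calc v * (r / 4 * ‖s‖) = ∫ y in Metric.ball p (r / 4), r / 4 * ‖s‖ := by
          rw [setIntegral_const, smul_eq_mul, hv, Measure.real, Measure.real,
            Measure.addHaar_ball_center volume p]
      _ ≤ ∫ y in Metric.ball p (r / 4), Real.exp (dotp s y) :=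
          setIntegral_mono_on (integrableOn_const measure_ball_lt_top.ne) (iE.mono_set hsub)
            measurableSet_ball hlow
      _ ≤ _ := setIntegral_mono_set iE
          (Filter.Eventually.of_forall fun y => (Real.exp_pos _).le) hsub.eventuallyLE
  refine Filter.tendsto_atTop_mono hbound ?_
  exact ((tendsto_norm_cocompact_atTop).const_mul_atTop (by positivity)).const_mul_atTop hvpos

lemma crit {n : ℕ} {P : Set (Fin n → ℝ)} (hc : IsCompact P)
    (h0 : (0 : Fin n → ℝ) ∈ interior P) (c : Fin n → ℝ)
    (hmin : ∀ s : Fin n → ℝ, (∫ y in P, Real.exp (dotp c y)) ≤ ∫ y in P, Real.exp (dotp s y))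
    (i : Fin n) : ∫ y in P, y i * Real.exp (dotp c y) = 0 := by
  set H : ℝ → ℝ := fun t => ∫ y in P, y i * Real.exp (dotp (c + t • Pi.single i 1) y) with hH
  have cH : Continuous H := (D_cont hc i).comp (by fun_prop)
  have hH0 : H 0 = ∫ y in P, y i * Real.exp (dotp c y) := by simp [hH]
  have hsgn : ∀ t : ℝ, t ≠ 0 → 0 < t * H t := by
    intro t ht
    have hne : c ≠ c + t • Pi.single i (1 : ℝ) := by
      intro h
      have := congrFun h i
      simp [ht] at this
    have hk := key hc h0 (c + t • Pi.single i (1 : ℝ)) c hne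
    rw [Finset.sum_eq_single i] at hk
    · have := hmin (c + t • Pi.single i (1 : ℝ))
      simp only [Pi.add_apply, Pi.smul_apply, Pi.single_eq_same, smul_eq_mul, mul_one] at hk
      change _ + (c i - (c i + t)) * H t < _ at hk
      linarith
    · intro j _ hj
      simp [hj]
    · simp
  rw [← hH0]
  apply le_antisymm
  · refine le_of_tendsto (cH.continuousWithinAt (s := Set.Iio 0) (x := 0)) ?_
    filter_upwards [self_mem_nhdsWithin] with t ht
    have ht : t < 0 := ht
    have := hsgn t ht.ne
    nlinarith
  · refine ge_of_tendsto (cH.continuousWithinAt (s := Set.Ioi 0) (x := 0)) ?_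
    filter_upwards [self_mem_nhdsWithin] with t ht
    have ht : 0 < t := ht
    exact (pos_of_mul_pos_right (hsgn t ht.ne') ht.le).le

/-- There is a unique `c ∈ ℝⁿ` with `∫_P yᵢ e^{⟨c,y⟩} dy = 0` for all `i`; moreover `c`
is the unique minimum point of `F(s) = ∫_P e^{⟨s,y⟩} dy`. -/
theorem exists_unique_soliton_vector {n : ℕ} (V : Finset (Fin n → ℝ)) (P : Set (Fin n → ℝ))
    (hP : P = convexHull ℝ (V : Set (Fin n → ℝ)))
    (h0 : (0 : Fin n → ℝ) ∈ interior P) :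
    ∃ c : Fin n → ℝ,
      (∀ i, ∫ y in P, y i * Real.exp (dotp c y) = 0) ∧
      (∀ c' : Fin n → ℝ, (∀ i, ∫ y in P, y i * Real.exp (dotp c' y) = 0) → c' = c) ∧
      (∀ s : Fin n → ℝ, s ≠ c →
        (∫ y in P, Real.exp (dotp c y)) < ∫ y in P, Real.exp (dotp s y)) := by
  have hc : IsCompact P := hP ▸ V.finite_toSet.isCompact_convexHull (𝕜 := ℝ)
  obtain ⟨c, hmin⟩ := (F_cont hc).exists_forall_le (coercive hc h0)
  have hcrit := crit hc h0 c hmin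
  have hstrict : ∀ c : Fin n → ℝ, (∀ i, ∫ y in P, y i * Real.exp (dotp c y) = 0) →
      ∀ s : Fin n → ℝ, s ≠ c →
        (∫ y in P, Real.exp (dotp c y)) < ∫ y in P, Real.exp (dotp s y) := by
    intro c h s hs
    simpa [h] using key hc h0 c s hs
  refine ⟨c, hcrit, fun c' h' => ?_, hstrict c hcrit⟩
  by_contra hne
  exact absurd (hstrict c hcrit c' hne) (hstrict c' h' c (Ne.symm hne)).le.not_gt
end
end

section
/- Fix ε₀ ∈ (0,1]. There exists a constant C > 0, depending only on n, P, c, c₀ and ε₀, such that for every t ∈ [ε₀,1], every solution φ of the continuity-method equation at parameter t, and every λ ≥ 1, the sublevel set A_λ := {x ∈ ℝⁿ : w_t(x) ≤ m_t + λ} (where w_t := tφ + (1−t)φ⁰ and m_t := inf_{ℝⁿ} w_t) has Lebesgue measure vol(A_λ) ≤ C λⁿ e^{m_t/2}. -/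
open MeasureTheory

noncomputable section

/-- The Legendre transform `φ⁰(x) = sup_{y ∈ P°} (⟨x,y⟩ - u⁰(y))`. -/
def phi0 {n d : ℕ} (N : Fin d → Fin n → ℤ) (x : Fin n → ℝ) : ℝ :=
  sSup ((fun y => dotp x y - u0 N y) '' interior (Pset N))

/-- The gradient of a function on `Fin n → ℝ`. -/
def grad {n : ℕ} (f : (Fin n → ℝ) → ℝ) (x : Fin n → ℝ) : Fin n → ℝ :=
  fun p => fderiv ℝ f x (Pi.single p 1)

/-- The Euclidean norm of `x ∈ ℝⁿ`. -/
def eucNorm {n : ℕ} (x : Fin n → ℝ) : ℝ := Real.sqrt (∑ j, x j ^ 2)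

/-- The function `w_t = tφ + (1-t)φ⁰`. -/
def wfun {n d : ℕ} (N : Fin d → Fin n → ℤ) (t : ℝ) (φ : (Fin n → ℝ) → ℝ)
    (x : Fin n → ℝ) : ℝ :=
  t * φ x + (1 - t) * phi0 N x

/-- A solution of the continuity-method equation at parameter `t`: a smooth strictly
convex `φ : ℝⁿ → ℝ` whose gradient map is a diffeomorphism from `ℝⁿ` onto `P°`,
satisfying `det D²φ = exp(-c₀ - w_t - ⟨c, Dφ⟩)` with `w_t = tφ + (1-t)φ⁰`. -/
def IsSolution {n d : ℕ} (N : Fin d → Fin n → ℤ) (c : Fin n → ℝ) (c₀ t : ℝ)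
    (φ : (Fin n → ℝ) → ℝ) : Prop :=
  ContDiff ℝ (⊤ : ℕ∞) φ ∧ StrictConvexOn ℝ Set.univ φ ∧
  Set.BijOn (grad φ) Set.univ (interior (Pset N)) ∧
  ContDiffOn ℝ (⊤ : ℕ∞) (Function.invFun (grad φ)) (interior (Pset N)) ∧
  ∀ x, (hess φ x).det = Real.exp (-c₀ - wfun N t φ x - dotp c (grad φ x))

open Topology Filter in
lemma aux_secdiff (g g' : ℝ → ℝ) (k0 k : ℝ) (hg : ∀ s, HasDerivAt g (g' s) s)
    (hg' : HasDerivAt g' k0 0)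
    (h : ∀ᶠ s in 𝓝 (0:ℝ), g s + g (-s) - 2 * g 0 ≤ k * s ^ 2) : k0 ≤ k := by
  by_contra hk
  push Not at hk
  let F : ℝ → ℝ := fun s => g s + g (-s) - 2 * g 0 - k * s ^ 2
  have hF : ∀ s, HasDerivAt F (g' s - g' (-s) - 2 * k * s) s := by
    intro s
    have h1 : HasDerivAt (fun s => g (-s)) (-(g' (-s))) s := by
      have := (hg (-s)).comp s (hasDerivAt_neg s)
      simpa [Function.comp_def] using this
    have h2 := ((((hg s).add h1).sub_const (2 * g 0)).sub (((hasDerivAt_id s).pow 2).const_mul k))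
    convert! h2 using 1
    simp
    ring
  have hdF : deriv F = fun s => g' s - g' (-s) - 2 * k * s := funext fun s => (hF s).deriv
  have hddF : HasDerivAt (fun s => g' s - g' (-s) - 2 * k * s) (2 * k0 - 2 * k) 0 := by
    have h1 : HasDerivAt (fun s => g' (-s)) (-k0) 0 := by
      have h0 : HasDerivAt g' k0 (-(0:ℝ)) := by simpa using hg'
      have := h0.comp (0:ℝ) (hasDerivAt_neg (0:ℝ))
      simpa [Function.comp_def] using this
    have h2 := (hg'.sub h1).sub ((hasDerivAt_id (0:ℝ)).const_mul (2 * k))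
    convert! h2 using 1
    simp
    ring
  have hmin : IsLocalMin F 0 := by
    apply isLocalMin_of_deriv_deriv_pos
    · rw [hdF, hddF.deriv]; linarith
    · rw [hdF]; simp
    · exact (hF 0).continuousAt
  have h0 : F =ᶠ[𝓝 0] fun _ => (0:ℝ) := by
    have hF0 : F 0 = 0 := by simp [F]; ring
    filter_upwards [hmin, h] with s hs1 hs2
    rw [hF0] at hs1
    apply le_antisymm _ hs1
    simp only [F]; linarith
  have h1 : deriv (deriv F) 0 = 0 := by
    rw [h0.deriv.deriv_eq]; simp
  rw [hdF, hddF.deriv] at h1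
  linarith

lemma aux_hess_eq {n : ℕ} {φ : (Fin n → ℝ) → ℝ} (hφ : ContDiff ℝ (⊤ : ℕ∞) φ) (x : Fin n → ℝ)
    (p q : Fin n) : hess φ x p q = fderiv ℝ (fderiv ℝ φ) x (Pi.single p 1) (Pi.single q 1) := by
  have hd : DifferentiableAt ℝ (fderiv ℝ φ) x :=
    (hφ.fderiv_right (m := 1) (by norm_cast)).differentiable (by norm_num) x
  simp only [hess, Matrix.of_apply]
  rw [fderiv_clm_apply hd (differentiableAt_const _)]
  simp

lemma aux_pi_sum {n : ℕ} (v : Fin n → ℝ) : v = ∑ p, v p • (Pi.single p (1:ℝ) : Fin n → ℝ) := by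
  ext j
  simp [Finset.sum_apply, Pi.single_apply]

lemma aux_quad {n : ℕ} {φ : (Fin n → ℝ) → ℝ} (hφ : ContDiff ℝ (⊤ : ℕ∞) φ) (x v : Fin n → ℝ) :
    v ⬝ᵥ (hess φ x).mulVec v = fderiv ℝ (fderiv ℝ φ) x v v := by
  conv_rhs => rw [aux_pi_sum v]
  simp only [map_sum, map_smul, FunLike.coe_sum, Finset.sum_apply, FunLike.coe_smul,
    Pi.smul_apply, smul_eq_mul, dotProduct, Matrix.mulVec, aux_hess_eq hφ, Finset.mul_sum]
  rw [Finset.sum_comm]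
  refine Finset.sum_congr rfl fun i _ => Finset.sum_congr rfl fun j _ => ?_
  ring

lemma aux_line {n : ℕ} {φ : (Fin n → ℝ) → ℝ} (hφ : ContDiff ℝ (⊤ : ℕ∞) φ) (x v : Fin n → ℝ)
    (s : ℝ) : HasDerivAt (fun s : ℝ => φ (x + s • v)) (fderiv ℝ φ (x + s • v) v) s := by
  have h1 : HasDerivAt (fun s : ℝ => x + s • v) v s := by
    simpa using ((hasDerivAt_id s).smul_const v).const_add x
  exact (hφ.differentiable (by norm_num) (x + s • v)).hasFDerivAt.comp_hasDerivAt s h1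

lemma aux_line2 {n : ℕ} {φ : (Fin n → ℝ) → ℝ} (hφ : ContDiff ℝ (⊤ : ℕ∞) φ) (x v : Fin n → ℝ) :
    HasDerivAt (fun s : ℝ => fderiv ℝ φ (x + s • v) v) (v ⬝ᵥ (hess φ x).mulVec v) 0 := by
  rw [aux_quad hφ]
  have h1 : HasDerivAt (fun s : ℝ => x + s • v) v 0 := by
    simpa using ((hasDerivAt_id (0:ℝ)).smul_const v).const_add x
  have hd : DifferentiableAt ℝ (fderiv ℝ φ) (x + (0:ℝ) • v) :=
    (hφ.fderiv_right (m := 1) (by norm_cast)).differentiable (by norm_num) _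
  have h2 := hd.hasFDerivAt.comp_hasDerivAt (0:ℝ) h1
  have h3 := h2.clm_apply (hasDerivAt_const (0:ℝ) v)
  simpa using h3

open Topology Filter in
lemma aux_secdir {n : ℕ} {φ : (Fin n → ℝ) → ℝ} (hφ : ContDiff ℝ (⊤ : ℕ∞) φ) (x v : Fin n → ℝ)
    (t k : ℝ)
    (h : ∀ᶠ s in 𝓝 (0:ℝ), t * (φ (x + s • v) + φ (x + (-s) • v) - 2 * φ x) ≤ k * s ^ 2) :
    t * (v ⬝ᵥ (hess φ x).mulVec v) ≤ k := by
  apply aux_secdiff (fun s => t * φ (x + s • v)) _ _ _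
    (fun s => (aux_line hφ x v s).const_mul t) ((aux_line2 hφ x v).const_mul t)
  filter_upwards [h] with s hs
  simp only [zero_smul, add_zero]
  linarith

lemma aux_mid {n : ℕ} {φ : (Fin n → ℝ) → ℝ} (hc : ConvexOn ℝ Set.univ φ) (x v : Fin n → ℝ)
    (s : ℝ) : 0 ≤ φ (x + s • v) + φ (x + (-s) • v) - 2 * φ x := by
  have := hc.2 (Set.mem_univ (x + s • v)) (Set.mem_univ (x + (-s) • v))
    (by norm_num : (0:ℝ) ≤ 1/2) (by norm_num : (0:ℝ) ≤ 1/2) (by norm_num)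
  have e : (1/2:ℝ) • (x + s • v) + (1/2:ℝ) • (x + (-s) • v) = x := by
    ext j; simp; ring
  rw [e] at this
  simp only [smul_eq_mul] at this
  linarith

lemma aux_psd {n : ℕ} {φ : (Fin n → ℝ) → ℝ} (hφ : ContDiff ℝ (⊤ : ℕ∞) φ)
    (hc : ConvexOn ℝ Set.univ φ) (x : Fin n → ℝ) : (hess φ x).PosSemidef := by
  apply Matrix.PosSemidef.of_dotProduct_mulVec_nonneg
  · ext p q
    have hs : IsSymmSndFDerivAt ℝ φ x := hφ.contDiffAt.isSymmSndFDerivAt (by simp; norm_cast)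
    simp only [Matrix.conjTranspose_apply, star_trivial, aux_hess_eq hφ]
    exact hs.eq _ _
  · intro v
    have := aux_secdir hφ x v (-1) 0 (Filter.Eventually.of_forall fun s => by
      have := aux_mid hc x v s; linarith)
    simp only [star_trivial]
    linarith

lemma aux_det_le {n : ℕ} (hn : 1 ≤ n) (M : Matrix (Fin n) (Fin n) ℝ) (hM : M.PosSemidef) (k : ℝ)
    (hk : ∀ i, M i i ≤ k) : M.det ≤ k ^ n := by
  have hn' : (0:ℝ) < n := by exact_mod_cast hn
  have hd := hM.isHermitian.det_eq_prod_eigenvalues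
  have ht := hM.isHermitian.trace_eq_sum_eigenvalues
  have hnn := hM.eigenvalues_nonneg
  simp only [RCLike.ofReal_real_eq_id, id] at hd ht
  have ham := Real.geom_mean_le_arith_mean Finset.univ (fun _ => (1:ℝ)) hM.isHermitian.eigenvalues
    (by simp) (by simp; omega) (fun i _ => hnn i)
  simp only [Real.rpow_one, ← hd, one_mul, ← ht] at ham
  have htr : M.trace ≤ n * k := by
    rw [Matrix.trace]
    calc _ ≤ ∑ i : Fin n, k := Finset.sum_le_sum fun i _ => hk i
      _ = n * k := by simp
  simp only [Finset.sum_const, Finset.card_univ, Fintype.card_fin, nsmul_eq_mul, mul_one] at ham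
  have h0 : 0 ≤ M.det := hM.det_nonneg
  have h1 : M.det ^ ((n:ℝ)⁻¹) ≤ k := ham.trans (by rw [div_le_iff₀ hn']; linarith)
  calc M.det = (M.det ^ ((n:ℝ)⁻¹)) ^ n := by
        rw [Real.rpow_inv_natCast_pow h0 (by omega)]
    _ ≤ k ^ n := pow_le_pow_left₀ (by positivity) h1 n

open Topology Filter in
lemma aux_max {n : ℕ} {φ p : (Fin n → ℝ) → ℝ} (hφ : ContDiff ℝ (⊤ : ℕ∞) φ)
    (hp : ConvexOn ℝ Set.univ p) (t : ℝ) (T : Matrix (Fin n) (Fin n) ℝ) (b : Fin n → ℝ)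
    (r m k : ℝ) (hr : 0 < r) (hk : 2 < k * r ^ 2)
    (h1 : ∀ a : Fin n → ℝ, (∀ i, |a i| ≤ r) → m ≤ t * φ (b + T.mulVec a) + p (b + T.mulVec a))
    (h2 : ∀ a : Fin n → ℝ, (∀ i, |a i| ≤ r) →
      t * φ (b + T.mulVec a) + p (b + T.mulVec a) ≤ m + 1) :
    ∃ a : Fin n → ℝ, (∀ i, |a i| ≤ r) ∧
      ∀ i, t * (T.col i ⬝ᵥ (hess φ (b + T.mulVec a)).mulVec (T.col i)) ≤ k := by
  have hpc : Continuous p := hp.locallyLipschitz.continuous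
  have hφc : Continuous φ := hφ.continuous
  have hkpos : 0 < k := by
    by_contra h
    push Not at h
    nlinarith [sq_nonneg r]
  let G : (Fin n → ℝ) → ℝ := fun a =>
    t * φ (b + T.mulVec a) + p (b + T.mulVec a) - k / 2 * ∑ j, a j ^ 2
  have hTc : Continuous fun a : Fin n → ℝ => b + T.mulVec a :=
    continuous_const.add (Continuous.matrix_mulVec continuous_const continuous_id)
  have hG : Continuous G := by
    have e1 := hφc.comp hTc
    have e2 := hpc.comp hTc
    simp only [Function.comp_def] at e1 e2
    fun_prop
  have hbox : ∀ a : Fin n → ℝ, a ∈ Set.Icc (fun _ : Fin n => -r) (fun _ => r) ↔ ∀ i, |a i| ≤ r := by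
    intro a
    simp only [Set.mem_Icc, Pi.le_def, abs_le, forall_and]
  obtain ⟨a, ha, hmax⟩ := (isCompact_Icc (a := fun _ : Fin n => -r) (b := fun _ => r)).exists_isMaxOn
    ⟨0, (hbox 0).2 (by intro i; simpa using hr.le)⟩ hG.continuousOn
  have ha' := (hbox a).1 ha
  refine ⟨a, ha', fun i => ?_⟩
  have hlt : |a i| < r := by
    by_contra hge
    push Not at hge
    have hG0 : G 0 ≤ G a := hmax ((hbox 0).2 (by intro i; simpa using hr.le))
    have e1 : r ^ 2 ≤ ∑ j, a j ^ 2 := by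
      calc r ^ 2 ≤ |a i| ^ 2 := pow_le_pow_left₀ hr.le hge 2
        _ = a i ^ 2 := sq_abs _
        _ ≤ _ := Finset.single_le_sum (f := fun j => a j ^ 2) (fun j _ => sq_nonneg _)
          (Finset.mem_univ i)
    have e2 := h1 0 (by intro i; simpa using hr.le)
    have e3 := h2 a ha'
    simp only [G] at hG0
    have e4 : ∑ j : Fin n, (0 : Fin n → ℝ) j ^ 2 = 0 := by simp
    rw [e4] at hG0
    nlinarith
  apply aux_secdir hφ
  have hev : ∀ᶠ s in 𝓝 (0:ℝ), |s| < r - |a i| := by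
    have : Metric.ball (0:ℝ) (r - |a i|) ∈ 𝓝 (0:ℝ) := Metric.ball_mem_nhds _ (by linarith)
    filter_upwards [this] with s hs
    simpa using hs
  have hin : ∀ s : ℝ, |s| < r - |a i| → G (a + s • Pi.single i 1) ≤ G a := by
    intro s hs
    apply hmax
    apply (hbox _).2
    intro j
    by_cases hj : j = i
    · subst hj
      simp
      have := abs_add_le (a j) s
      linarith
    · simpa [hj] using ha' j
  have hsq : ∀ s : ℝ, ∑ j, (a + s • (Pi.single i 1 : Fin n → ℝ)) j ^ 2
      = ∑ j, a j ^ 2 + (2 * s * a i + s ^ 2) := by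
    intro s
    have : ∀ j, (a + s • (Pi.single i 1 : Fin n → ℝ)) j ^ 2
        = a j ^ 2 + (if j = i then 2 * s * a i + s ^ 2 else 0) := by
      intro j
      by_cases hj : j = i
      · subst hj; simp; ring
      · simp [hj]
    simp only [this, Finset.sum_add_distrib]
    simp
  have hT : ∀ s : ℝ, b + T.mulVec (a + s • (Pi.single i 1 : Fin n → ℝ))
      = (b + T.mulVec a) + s • T.col i := by
    intro s
    rw [Matrix.mulVec_add, Matrix.mulVec_smul, Matrix.mulVec_single_one, add_assoc]
  filter_upwards [hev] with s hs
  have e1 := hin s hs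
  have e2 := hin (-s) (by simpa using hs)
  simp only [G, hsq, hT] at e1 e2
  have e3 := aux_mid hp (b + T.mulVec a) (T.col i) s
  nlinarith

lemma aux_maxdet {n : ℕ} (K : Set (Fin n → ℝ)) (hK : IsCompact K) (x0 : Fin n → ℝ)
    (hx0 : x0 ∈ interior K) : ∃ T : Matrix (Fin n) (Fin n) ℝ, T.det ≠ 0 ∧
      (∀ i, x0 + T.col i ∈ K) ∧
      ∀ x ∈ K, ∃ a : Fin n → ℝ, (∀ i, |a i| ≤ 1) ∧ x = x0 + T.mulVec a := by
  let K0 : Set (Fin n → ℝ) := (fun v => x0 + v) ⁻¹' K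
  have hK0 : IsCompact K0 := (Homeomorph.addLeft x0).isCompact_preimage.2 hK
  have hcont : Continuous fun V : Fin n → Fin n → ℝ => |(Matrix.of V).det| :=
    (Continuous.matrix_det (continuous_id)).abs
  have hx0K := interior_subset hx0
  obtain ⟨V, hV, hmax⟩ := (isCompact_univ_pi (fun _ : Fin n => hK0)).exists_isMaxOn
    ⟨fun _ => 0, by simpa [K0, Set.mem_pi] using fun _ => hx0K⟩ hcont.continuousOn
  have hV' : ∀ i, x0 + V i ∈ K := fun i => hV i (Set.mem_univ i)
  have hdet : (Matrix.of V).det ≠ 0 := by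
    obtain ⟨ρ, hρ, hball⟩ := Metric.isOpen_iff.1 isOpen_interior x0 hx0
    have hm : (fun i => (ρ / 2) • (Pi.single i 1 : Fin n → ℝ)) ∈ Set.univ.pi fun _ : Fin n => K0 := by
      intro i _
      apply interior_subset
      apply interior_mono (s := (fun v => x0 + v) ⁻¹' (interior K))
      · exact Set.preimage_mono interior_subset
      rw [(isOpen_interior.preimage (by fun_prop)).interior_eq]
      apply hball
      simp only [Metric.mem_ball, dist_self_add_left, norm_smul, Pi.norm_single]
      rw [Real.norm_of_nonneg (by positivity)]
      simp
      exact hρ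
    have h1 := hmax hm
    have h2 : (Matrix.of fun i => (ρ / 2) • (Pi.single i 1 : Fin n → ℝ)) =
        (ρ / 2) • (1 : Matrix (Fin n) (Fin n) ℝ) := by
      ext i j
      simp [Matrix.one_apply, Pi.single_apply, eq_comm]
    simp only [Set.mem_ofPred_eq, h2, Matrix.det_smul, Matrix.det_one, mul_one] at h1
    intro h0
    rw [h0] at h1
    have : (0:ℝ) < |(ρ / 2) ^ Fintype.card (Fin n)| := by positivity
    rw [abs_zero] at h1
    exact absurd h1 (not_le.2 this)
  refine ⟨(Matrix.of V).transpose, by rwa [Matrix.det_transpose], hV', fun x hx => ?_⟩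
  set T := (Matrix.of V).transpose with hTdef
  have hTd : T.det = (Matrix.of V).det := Matrix.det_transpose _
  refine ⟨(T.det)⁻¹ • T.cramer (x - x0), fun i => ?_, ?_⟩
  · have hu : Function.update V i (x - x0) ∈ Set.univ.pi fun _ : Fin n => K0 := by
      intro j _
      by_cases hj : j = i
      · subst hj; simpa [K0] using hx
      · simpa [K0, hj] using hV' j
    have h1 := hmax hu
    have h2 : T.cramer (x - x0) i = (Matrix.of (Function.update V i (x - x0))).det := by
      rw [hTdef, Matrix.cramer_transpose_apply]
      rfl
    simp only [Set.mem_ofPred_eq] at h1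
    rw [Pi.smul_apply, smul_eq_mul, abs_mul, abs_inv, h2, hTd]
    rw [inv_mul_le_iff₀ (abs_pos.2 hdet)]
    simpa using h1
  · rw [Matrix.mulVec_smul, Matrix.mulVec_cramer, smul_smul, hTd, inv_mul_cancel₀ hdet]
    simp

lemma aux_P_bdd {n d : ℕ} (N : Fin d → Fin n → ℤ)
    (hQ : (0 : Fin n → ℝ) ∈ interior (convexHull ℝ (Set.range fun i => fun j => (N i j : ℝ)))) :
    ∃ R > 0, ∀ y ∈ Pset N, ∀ j, |y j| ≤ R := by
  obtain ⟨ρ, hρ, hball⟩ := Metric.isOpen_iff.1 isOpen_interior _ hQ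
  have hhalf : ∀ y ∈ Pset N, ∀ z ∈ convexHull ℝ (Set.range fun i => fun j => (N i j : ℝ)),
      -1 ≤ ∑ j, y j * z j := by
    intro y hy
    have hconv : Convex ℝ {z : Fin n → ℝ | -1 ≤ ∑ j, y j * z j} := by
      intro u hu v hv a b ha hb hab
      simp only [Set.mem_ofPred_eq] at hu hv ⊢
      have : ∑ j, y j * (a • u + b • v) j = a * ∑ j, y j * u j + b * ∑ j, y j * v j := by
        rw [Finset.mul_sum, Finset.mul_sum, ← Finset.sum_add_distrib]
        refine Finset.sum_congr rfl fun j _ => ?_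
        simp; ring
      rw [this]
      nlinarith
    have := convexHull_min (s := Set.range fun i => fun j => (N i j : ℝ)) (by
      rintro _ ⟨i, rfl⟩
      exact hy i) hconv
    exact fun z hz => this hz
  refine ⟨2 / ρ, by positivity, fun y hy j => ?_⟩
  have key : ∀ σ : ℝ, |σ| < ρ → -1 ≤ y j * σ := by
    intro σ hσ
    have h1 := hhalf y hy (Pi.single j σ) (interior_subset (hball (by simpa [Pi.norm_single] using hσ)))
    simpa [Pi.single_apply] using h1
  have h1 := key (ρ / 2) (by rw [abs_of_pos (by positivity)]; linarith)
  have h2 := key (-(ρ / 2)) (by rw [abs_neg, abs_of_pos (by positivity)]; linarith)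
  rw [le_div_iff₀ hρ]
  rcases abs_cases (y j) with ⟨h, _⟩ | ⟨h, _⟩ <;> rw [h] <;> linarith

lemma aux_P_zero {n d : ℕ} (N : Fin d → Fin n → ℤ) : (0 : Fin n → ℝ) ∈ interior (Pset N) := by
  have ho : IsOpen {y : Fin n → ℝ | ∀ i, -1 < ∑ j, y j * (N i j : ℝ)} := by
    simp only [Set.ofPred_forall]
    exact isOpen_iInter_of_finite fun i => isOpen_lt continuous_const (by fun_prop)
  apply interior_maximal _ ho
  · simp
  · intro y hy i
    exact (hy i).le

lemma aux_phi0_bdd {n d : ℕ} (N : Fin d → Fin n → ℤ)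
    (hQ : (0 : Fin n → ℝ) ∈ interior (convexHull ℝ (Set.range fun i => fun j => (N i j : ℝ))))
    (x : Fin n → ℝ) : BddAbove ((fun y => dotp x y - u0 N y) '' interior (Pset N)) := by
  obtain ⟨R, hR, hP⟩ := aux_P_bdd N hQ
  refine ⟨(∑ j, |x j| * R) + d, ?_⟩
  rintro _ ⟨y, hy, rfl⟩
  have hy' := interior_subset hy
  have h1 : dotp x y ≤ ∑ j, |x j| * R := by
    refine Finset.sum_le_sum fun j _ => ?_
    calc x j * y j ≤ |x j * y j| := le_abs_self _
      _ = |x j| * |y j| := abs_mul _ _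
      _ ≤ _ := mul_le_mul_of_nonneg_left (hP y hy' j) (abs_nonneg _)
  have h2 : -(d:ℝ) ≤ u0 N y := by
    calc -(d:ℝ) = ∑ i : Fin d, (-1:ℝ) := by simp
      _ ≤ _ := Finset.sum_le_sum fun i _ => by
        have h0 : 0 ≤ lfun N i y := by
          have := hy' i
          simp only [lfun]; linarith
        have := Real.self_sub_one_le_mul_log h0
        linarith
  simp only
  linarith

lemma aux_phi0_nonneg {n d : ℕ} (N : Fin d → Fin n → ℤ)
    (hQ : (0 : Fin n → ℝ) ∈ interior (convexHull ℝ (Set.range fun i => fun j => (N i j : ℝ))))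
    (x : Fin n → ℝ) : 0 ≤ phi0 N x := by
  apply le_csSup (aux_phi0_bdd N hQ x)
  exact ⟨0, aux_P_zero N, by simp [dotp, u0, lfun]⟩

lemma aux_phi0_convex {n d : ℕ} (N : Fin d → Fin n → ℤ)
    (hQ : (0 : Fin n → ℝ) ∈ interior (convexHull ℝ (Set.range fun i => fun j => (N i j : ℝ)))) :
    ConvexOn ℝ Set.univ (phi0 N) := by
  refine ⟨convex_univ, fun x _ z _ a b ha hb hab => ?_⟩
  apply csSup_le (Set.Nonempty.image _ ⟨0, aux_P_zero N⟩)
  rintro _ ⟨y, hy, rfl⟩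
  have h1 : dotp x y - u0 N y ≤ phi0 N x := le_csSup (aux_phi0_bdd N hQ x) ⟨y, hy, rfl⟩
  have h2 : dotp z y - u0 N y ≤ phi0 N z := le_csSup (aux_phi0_bdd N hQ z) ⟨y, hy, rfl⟩
  have h3 : dotp (a • x + b • z) y = a * dotp x y + b * dotp z y := by
    simp only [dotp]
    rw [Finset.mul_sum, Finset.mul_sum, ← Finset.sum_add_distrib]
    refine Finset.sum_congr rfl fun j _ => ?_
    simp; ring
  simp only [h3, smul_eq_mul]
  have h4 : u0 N y = a * u0 N y + b * u0 N y := by rw [← add_mul, hab, one_mul]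
  have h5 := mul_le_mul_of_nonneg_left h1 ha
  have h6 := mul_le_mul_of_nonneg_left h2 hb
  linarith

lemma aux_support {n : ℕ} {φ : (Fin n → ℝ) → ℝ} (hφ : ContDiff ℝ (⊤ : ℕ∞) φ)
    (hc : ConvexOn ℝ Set.univ φ) (x z : Fin n → ℝ) : φ z + fderiv ℝ φ z (x - z) ≤ φ x := by
  have h1 : ConvexOn ℝ Set.univ (fun s : ℝ => φ (z + s • (x - z))) := by
    refine ⟨convex_univ, fun s _ s' _ a b ha hb hab => ?_⟩
    have := hc.2 (Set.mem_univ (z + s • (x - z))) (Set.mem_univ (z + s' • (x - z))) ha hb hab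
    have e : z + (a • s + b • s') • (x - z) = a • (z + s • (x - z)) + b • (z + s' • (x - z)) := by
      ext j
      have : z j = a * z j + b * z j := by rw [← add_mul, hab, one_mul]
      simp only [Pi.add_apply, Pi.smul_apply, Pi.sub_apply, smul_eq_mul]
      linear_combination this
    simp only [e]
    exact this
  have h2 := aux_line hφ z (x - z) 0
  have h3 := h1.le_slope_of_hasDerivAt (Set.mem_univ 0) (Set.mem_univ 1) (by norm_num) h2
  simp [slope_def_field] at h3
  rw [map_sub]
  linarith

lemma aux_coercive {n d : ℕ} (N : Fin d → Fin n → ℤ) {φ : (Fin n → ℝ) → ℝ}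
    (hφ : ContDiff ℝ (⊤ : ℕ∞) φ) (hc : ConvexOn ℝ Set.univ φ)
    (hs : Set.BijOn (grad φ) Set.univ (interior (Pset N))) :
    ∃ ε > 0, ∃ D : ℝ, ∀ x j, ε * |x j| - D ≤ φ x := by
  obtain ⟨ρ, hρ, hball⟩ := Metric.isOpen_iff.1 isOpen_interior _ (aux_P_zero N)
  have key : ∀ (σ : ℝ) (j : Fin n), |σ| < ρ → ∃ D : ℝ, 0 ≤ D ∧ ∀ x, σ * x j - D ≤ φ x := by
    intro σ j hσ
    obtain ⟨z, _, hz⟩ := hs.surjOn (hball (by simpa [Pi.norm_single] using hσ : (Pi.single j σ : Fin n → ℝ) ∈ _))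
    refine ⟨|σ * z j - φ z|, abs_nonneg _, fun x => ?_⟩
    have h1 := aux_support hφ hc x z
    have h2 : fderiv ℝ φ z (x - z) = σ * (x j - z j) := by
      rw [aux_pi_sum (x - z)]
      simp only [map_sum, map_smul, smul_eq_mul]
      have : ∀ p, fderiv ℝ φ z (Pi.single p 1) = (Pi.single j σ : Fin n → ℝ) p :=
        fun p => congrFun hz p
      simp only [this]
      simp [Pi.single_apply]
      ring
    have := le_abs_self (σ * z j - φ z)
    rw [h2] at h1
    linarith
  choose D1 hD1 h1 using fun j => key (ρ / 2) j (by rw [abs_of_pos (by positivity)]; linarith)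
  choose D2 hD2 h2 using fun j => key (-(ρ / 2)) j
    (by rw [abs_neg, abs_of_pos (by positivity)]; linarith)
  refine ⟨ρ / 2, by positivity, ∑ j, (D1 j + D2 j), fun x j => ?_⟩
  have h3 : D1 j + D2 j ≤ ∑ j, (D1 j + D2 j) :=
    Finset.single_le_sum (f := fun j => D1 j + D2 j) (fun i _ => add_nonneg (hD1 i) (hD2 i))
      (Finset.mem_univ j)
  have := h1 j x
  have := h2 j x
  have := hD1 j
  have := hD2 j
  rcases abs_cases (x j) with ⟨h, _⟩ | ⟨h, _⟩ <;> rw [h] <;> linarith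

lemma aux_vol {n : ℕ} (T : Matrix (Fin n) (Fin n) ℝ) (x0 : Fin n → ℝ) (L : ℝ) (hL : 0 ≤ L)
    (A : Set (Fin n → ℝ))
    (hA : ∀ x ∈ A, ∃ a : Fin n → ℝ, (∀ i, |a i| ≤ L) ∧ x = x0 + T.mulVec a) :
    volume A ≤ ENNReal.ofReal (|T.det| * (2 * L) ^ n) := by
  have hsub : A ⊆ (fun v => x0 + v) '' (Matrix.toLin' T '' Set.Icc (fun _ : Fin n => -L) (fun _ => L)) := by
    intro x hx
    obtain ⟨a, ha, rfl⟩ := hA x hx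
    refine ⟨_, ⟨a, ?_, rfl⟩, ?_⟩
    · simp only [Set.mem_Icc, Pi.le_def, ← forall_and]
      exact fun i => abs_le.1 (ha i)
    · simp
  refine (measure_mono hsub).trans ?_
  rw [Set.image_add_left, measure_preimage_add, Measure.addHaar_image_linearMap,
    Real.volume_Icc_pi, LinearMap.det_toLin', ENNReal.ofReal_mul (abs_nonneg _)]
  apply le_of_eq
  congr 1
  simp only [Finset.prod_const, Finset.card_univ, Fintype.card_fin]
  rw [← ENNReal.ofReal_pow (by linarith)]
  congr 2
  ring

/-- Uniform sublevel-set volume estimate: `vol(A_λ) ≤ C λⁿ e^{m_t/2}` for all `λ ≥ 1`,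
where `A_λ = {w_t ≤ m_t + λ}` and `m_t = inf_{ℝⁿ} w_t`. -/
theorem sublevel_volume_bound {n d : ℕ} (hn : 1 ≤ n) (N : Fin d → Fin n → ℤ)
    (hQ : (0 : Fin n → ℝ) ∈ interior (convexHull ℝ (Set.range fun i => fun j => (N i j : ℝ))))
    (c : Fin n → ℝ) (c₀ : ℝ) (ε₀ : ℝ) (hε₀ : ε₀ ∈ Set.Ioc (0 : ℝ) 1) :
    ∃ C > 0, ∀ t ∈ Set.Icc ε₀ 1, ∀ φ : (Fin n → ℝ) → ℝ, IsSolution N c c₀ t φ →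
      ∀ lam : ℝ, 1 ≤ lam →
        volume {x : Fin n → ℝ | wfun N t φ x ≤ sInf (Set.range (wfun N t φ)) + lam} ≤
          ENNReal.ofReal (C * lam ^ n * Real.exp (sInf (Set.range (wfun N t φ)) / 2)) := by
  obtain ⟨hε0, hε1⟩ := hε₀
  obtain ⟨R, hR, hPR⟩ := aux_P_bdd N hQ
  have hn' : (0:ℝ) < n := by exact_mod_cast hn
  obtain ⟨B, hB⟩ : ∃ B : ℝ, B = ∑ j, |c j| * R := ⟨_, rfl⟩
  obtain ⟨r, hrdef⟩ : ∃ r : ℝ, r = 1 / (2 * n) := ⟨_, rfl⟩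
  have hr : 0 < r := by rw [hrdef]; positivity
  obtain ⟨k, hkdef⟩ : ∃ k : ℝ, k = 3 / r ^ 2 := ⟨_, rfl⟩
  have hk0 : 0 < k := by rw [hkdef]; positivity
  have hk2 : 2 < k * r ^ 2 := by
    rw [hkdef, div_mul_cancel₀ _ (by positivity)]; norm_num
  obtain ⟨Q, hQdef⟩ : ∃ Q : ℝ, Q = (k / ε₀) ^ n * Real.exp (c₀ + 1 + B) := ⟨_, rfl⟩
  have hQ0 : 0 < Q := by rw [hQdef]; positivity
  refine ⟨4 ^ n * Real.sqrt Q, by positivity, ?_⟩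
  rintro t ⟨ht0, ht1⟩ φ ⟨hφ, hsc, hbij, -, heq⟩ lam hlam
  have htpos : 0 < t := lt_of_lt_of_le hε0 ht0
  have hc := hsc.convexOn
  have hp : ConvexOn ℝ Set.univ (fun x => (1 - t) * phi0 N x) :=
    (aux_phi0_convex N hQ).smul (by linarith : (0:ℝ) ≤ 1 - t)
  have hw : ConvexOn ℝ Set.univ (wfun N t φ) := (hc.smul htpos.le).add hp
  have hwc : Continuous (wfun N t φ) := hw.locallyLipschitz.continuous
  obtain ⟨ε, hε, D, hD⟩ := aux_coercive N hφ hc hbij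
  have hwlow : ∀ x j, t * (ε * |x j| - D) ≤ wfun N t φ x := by
    intro x j
    have h1 := mul_le_mul_of_nonneg_left (hD x j) htpos.le
    have h2 := mul_nonneg (by linarith : (0:ℝ) ≤ 1 - t) (aux_phi0_nonneg N hQ x)
    simp only [wfun]
    linarith
  have hbdd : BddBelow (Set.range (wfun N t φ)) := by
    refine ⟨t * (-D), ?_⟩
    rintro _ ⟨x, rfl⟩
    refine le_trans (mul_le_mul_of_nonneg_left ?_ htpos.le) (hwlow x ⟨0, by omega⟩)
    have : 0 ≤ ε * |x ⟨0, by omega⟩| := by positivity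
    linarith
  generalize hm : sInf (Set.range (wfun N t φ)) = m
  have hmle : ∀ x, m ≤ wfun N t φ x := fun x => hm ▸ csInf_le hbdd ⟨x, rfl⟩
  obtain ⟨_, ⟨x0, rfl⟩, hx0⟩ := exists_lt_of_csInf_lt (Set.range_nonempty (wfun N t φ))
    (by rw [hm]; linarith : sInf (Set.range (wfun N t φ)) < m + 1 / 2)
  let K : Set (Fin n → ℝ) := {x | wfun N t φ x ≤ m + 1}
  have hKclosed : IsClosed K := isClosed_le hwc continuous_const
  have hKc : IsCompact K := by
    obtain ⟨S, hS⟩ : ∃ S : ℝ, S = ((m + 1) / t + D) / ε := ⟨_, rfl⟩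
    apply (isCompact_Icc (a := fun _ : Fin n => -S) (b := fun _ => S)).of_isClosed_subset hKclosed
    intro x hx
    simp only [Set.mem_Icc, Pi.le_def, ← forall_and]
    intro j
    apply abs_le.1
    have h1 : t * (ε * |x j| - D) ≤ m + 1 := (hwlow x j).trans hx
    rw [hS, le_div_iff₀ hε, ← sub_le_iff_le_add, le_div_iff₀ htpos]
    linarith
  have hKconv : Convex ℝ K := by
    have := hw.convex_le (m + 1)
    simpa [K] using this
  have hx0K : x0 ∈ K := by
    change wfun N t φ x0 ≤ m + 1
    linarith
  have hx0i : x0 ∈ interior K := by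
    refine interior_maximal (t := {x | wfun N t φ x < m + 1}) ?_ (isOpen_lt hwc continuous_const) ?_
    · intro x (hx : wfun N t φ x < m + 1)
      exact (le_of_lt hx : wfun N t φ x ≤ m + 1)
    · change wfun N t φ x0 < m + 1
      linarith
  obtain ⟨T, hT0, hTK, hKT⟩ := aux_maxdet K hKc x0 hx0i
  -- the box
  have hboxK : ∀ a : Fin n → ℝ, (∀ i, |a i| ≤ r) →
      (x0 + T.mulVec fun _ => r) + T.mulVec a ∈ K := by
    intro a ha
    have e : (x0 + T.mulVec fun _ => r) + T.mulVec a =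
        ∑ i : Fin n, (1 / (n:ℝ)) • (x0 + (n * (r + a i)) • T.col i) := by
      rw [add_assoc, ← Matrix.mulVec_add]
      ext j
      simp only [Pi.add_apply, Matrix.mulVec, dotProduct, Finset.sum_apply, Pi.smul_apply,
        smul_eq_mul, Matrix.col_apply, mul_add, Finset.sum_add_distrib, Finset.sum_const,
        Finset.card_univ, Fintype.card_fin, nsmul_eq_mul]
      have : (n:ℝ) * (1 / n * x0 j) = x0 j := by field_simp
      rw [this, ← Finset.sum_add_distrib]
      congr 1
      refine Finset.sum_congr rfl fun i _ => ?_
      field_simp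
    rw [e]
    apply hKconv.sum_mem
    · intro i _; positivity
    · simp; field_simp
    · intro i _
      have h1 := abs_le.1 (ha i)
      have hnr : (n:ℝ) * r = 1 / 2 := by rw [hrdef]; field_simp
      have h2 := hKconv hx0K (hTK i) (a := 1 - n * (r + a i)) (b := n * (r + a i))
        (by nlinarith) (by apply mul_nonneg hn'.le; linarith) (by ring)
      convert h2 using 1
      ext j
      simp
      ring
  obtain ⟨a, ha, hdiag⟩ := aux_max hφ hp t T (x0 + T.mulVec fun _ => r) r m k hr hk2
    (fun a _ => hmle _) (fun a ha => hboxK a ha)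
  have hzK := hboxK a ha
  generalize (x0 + T.mulVec fun _ => r) + T.mulVec a = z at hdiag hzK
  have hdet : t ^ n * (T.det ^ 2 * (hess φ z).det) ≤ k ^ n := by
    have hpsd : (t • (T.conjTranspose * hess φ z * T)).PosSemidef :=
      ((aux_psd hφ hc z).conjTranspose_mul_mul_same T).smul htpos.le
    have := aux_det_le hn _ hpsd k (by
      intro i
      refine le_trans (le_of_eq ?_) (hdiag i)
      rw [Matrix.smul_apply, smul_eq_mul, Matrix.mul_assoc, Matrix.mul_apply]
      rfl)
    rw [Matrix.det_smul, Matrix.det_mul, Matrix.det_mul, Matrix.det_conjTranspose,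
      Fintype.card_fin, star_trivial] at this
    refine le_trans (le_of_eq ?_) this
    ring
  have hH : Real.exp (-(c₀ + 1 + B) - m) ≤ (hess φ z).det := by
    rw [heq z]
    apply Real.exp_le_exp.2
    have h1 : wfun N t φ z ≤ m + 1 := hzK
    have h2 : dotp c (grad φ z) ≤ B := by
      rw [hB]
      refine Finset.sum_le_sum fun j _ => ?_
      calc c j * grad φ z j ≤ |c j * grad φ z j| := le_abs_self _
        _ = |c j| * |grad φ z j| := abs_mul _ _
        _ ≤ _ := mul_le_mul_of_nonneg_left
          (hPR _ (interior_subset (hbij.mapsTo (Set.mem_univ z))) j) (abs_nonneg _)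
    linarith
  have hT2 : T.det ^ 2 ≤ Q * Real.exp m := by
    have h1 : ε₀ ^ n * (T.det ^ 2 * Real.exp (-(c₀ + 1 + B) - m)) ≤ k ^ n := by
      refine le_trans ?_ hdet
      gcongr
    have h3 : Real.exp (-(c₀ + 1 + B) - m) = (Real.exp (c₀ + 1 + B) * Real.exp m)⁻¹ := by
      rw [← Real.exp_add, ← Real.exp_neg]; congr 1; ring
    rw [h3] at h1
    have h4 : 0 < Real.exp (c₀ + 1 + B) * Real.exp m := by positivity
    rw [hQdef, div_pow, mul_assoc, div_mul_eq_mul_div, le_div_iff₀ (by positivity)]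
    rw [← mul_assoc, mul_inv_le_iff₀ h4] at h1
    linarith
  have hTabs : |T.det| ≤ Real.sqrt Q * Real.exp (m / 2) := by
    apply abs_le_of_sq_le_sq _ (by positivity)
    rw [mul_pow, Real.sq_sqrt hQ0.le, ← Real.exp_nat_mul]
    rwa [show ((2:ℕ):ℝ) * (m / 2) = m by push_cast; ring]
  refine (aux_vol T x0 (2 * lam) (by linarith) _ ?_).trans (ENNReal.ofReal_le_ofReal ?_)
  · intro x hx
    have hx' : wfun N t φ x ≤ m + lam := hx
    have hl : 0 < 1 / (2 * lam) := by positivity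
    have hl1 : 1 / (2 * lam) ≤ 1 := by rw [div_le_one (by positivity)]; linarith
    have h1 := hw.2 (Set.mem_univ x0) (Set.mem_univ x) (sub_nonneg.2 hl1) hl.le (by ring)
    have h2 : (1 - 1 / (2 * lam)) • x0 + (1 / (2 * lam)) • x ∈ K := by
      refine h1.trans ?_
      simp only [smul_eq_mul]
      have e1 := mul_le_mul_of_nonneg_left hx0.le (sub_nonneg.2 hl1)
      have e2 := mul_le_mul_of_nonneg_left hx' hl.le
      have e3 : 1 / (2 * lam) * lam = 1 / 2 := by field_simp
      nlinarith
    obtain ⟨a, ha, hxa⟩ := hKT _ h2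
    refine ⟨(2 * lam) • a, fun i => ?_, ?_⟩
    · rw [Pi.smul_apply, smul_eq_mul, abs_mul, abs_of_pos (by positivity : 0 < 2 * lam)]
      have := ha i
      nlinarith
    · rw [Matrix.mulVec_smul]
      have : T.mulVec a = (1 - 1 / (2 * lam)) • x0 + (1 / (2 * lam)) • x - x0 := by
        rw [hxa]; simp
      rw [this]
      ext j
      simp
      field_simp
      ring
  · calc |T.det| * (2 * (2 * lam)) ^ n
        ≤ (Real.sqrt Q * Real.exp (m / 2)) * (2 * (2 * lam)) ^ n := by gcongr
      _ = 4 ^ n * Real.sqrt Q * lam ^ n * Real.exp (m / 2) := by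
        rw [show 2 * (2 * lam) = 4 * lam by ring, mul_pow]; ring
end
end
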